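/- Let (E,σ) with E = F⟨x₁⟩...⟨x_r⟩ be a Π-extension of a difference field (F,σ) with f_i = σ(x_i)/x_i ∈ F* and const(E,σ) = const(F,σ) = K. Let (H,σ) with H = F⟨y₁⟩...⟨y_s⟩[z₁]...[z_l] be an RΠ-extension of (F,σ) where the y_i are Π-monomials with σ(y_i)/y_i ∈ F⟨y₁⟩...⟨y_{i-1}⟩* and the z_i are R-monomials with σ(z_i)/z_i ∈ K* roots of unity. If there is a difference ring embedding λ : E → H with λ|_F = id, then r ≤ s. -/

import Mathlib

/-!
Forgetting `σ`, the inequality is a comparison of transcendence degrees over `F`.  The monomials in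
the `x i` being linearly independent over `F`, the `x i` are algebraically independent, and so are
their images in `H` because `λ` is injective.

Since `H` may have zero divisors, it is first replaced by a domain
(`exists_prime_algebraicIndependent`): the nonzero polynomials in the images of the `x i` form a
multiplicative set that avoids `0`, so some prime `P` of `H` is disjoint from it, and the images of
the `x i` remain algebraically independent in `H ⧸ P`.  That domain is generated over `F` by the
classes of the `y i`, their inverses and the roots of unity `z i`, so it is algebraic over the
subalgebra generated by the `s` classes of the `y i`, and its transcendence degree is at most `s`.
-/

/-- If the Laurent monomials in `x` are linearly independent over `F` (in the form of uniqueness of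
Laurent expansions), then `x` is algebraically independent. -/
lemma algebraicIndependent_of_laurent {F E : Type*} [Field F] [CommRing E] [Algebra F E]
    {r : ℕ} (x : Fin r → Eˣ)
    (h : ∀ w : E, ∃! c : (Fin r →₀ ℤ) →₀ F,
      w = c.sum (fun ν b => algebraMap F E b * ∏ i : Fin r, ((x i ^ (ν i) : Eˣ) : E))) :
    AlgebraicIndependent F (fun i => (x i : E)) := by
  rw [algebraicIndependent_iff]
  intro p hp
  have hφ : Function.Injective
      (fun m : Fin r →₀ ℕ => m.mapRange (fun n : ℕ => (n : ℤ)) Nat.cast_zero) :=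
    Finsupp.mapRange_injective _ _ Nat.cast_injective
  let q : (Fin r →₀ ℕ) →₀ F :=
    Finsupp.onFinset p.support (fun m => p.coeff m) (fun m hm => by simpa using hm)
  have hq : q = 0 := by
    apply Finsupp.mapDomain_injective hφ
    rw [Finsupp.mapDomain_zero]
    refine (h 0).unique ?_ (by simp)
    rw [Finsupp.sum_mapDomain_index (by simp) (by intros; simp [add_mul]),
      Finsupp.onFinset_sum _ (by simp), ← hp, MvPolynomial.aeval_def, MvPolynomial.eval₂_eq']
    simp
  ext m
  simpa [q] using DFunLike.congr_fun hq m

/-- Any algebraically independent family stays algebraically independent modulo a suitable prime. -/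
lemma exists_prime_algebraicIndependent {F H ι : Type*} [Field F] [CommRing H] [Algebra F H]
    {x : ι → H} (hx : AlgebraicIndependent F x) :
    ∃ P : Ideal H, P.IsPrime ∧
      AlgebraicIndependent F (fun i => (Ideal.Quotient.mk P (x i) : H ⧸ P)) := by
  let S : Submonoid H := (nonZeroDivisors (MvPolynomial ι F)).map (MvPolynomial.aeval (R := F) x)
  obtain ⟨P, hP, -, hd⟩ := Ideal.exists_le_prime_disjoint (⊥ : Ideal H) S (by
    rw [Set.disjoint_left]
    rintro a ha ⟨p, hp, rfl⟩
    exact nonZeroDivisors.ne_zero hp (hx.eq_zero_of_aeval_eq_zero p (by simpa using ha)))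
  refine ⟨P, hP, ?_⟩
  rw [algebraicIndependent_iff]
  intro p hp
  by_contra hne
  have h1 : MvPolynomial.aeval (fun i => (Ideal.Quotient.mk P (x i) : H ⧸ P)) p
      = Ideal.Quotient.mkₐ F P (MvPolynomial.aeval x p) :=
    DFunLike.congr_fun (MvPolynomial.comp_aeval x (Ideal.Quotient.mkₐ F P)).symm p
  rw [h1] at hp
  exact Set.disjoint_left.1 hd (Ideal.Quotient.eq_zero_iff_mem.1 hp)
    ⟨p, mem_nonZeroDivisors_of_ne_zero hne, rfl⟩

/-- A domain generated as an `F`-algebra by `s` units `y i`, their inverses, and elements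
`z j` having a positive power equal to `1` has transcendence degree at most `s`. -/
lemma card_le_of_algebraicIndependent {F D κ : Type*} [Field F] [CommRing D] [IsDomain D]
    [Algebra F D] {r s : ℕ} {x : Fin r → D} (hx : AlgebraicIndependent F x)
    (y : Fin s → Dˣ) (z : κ → D) (lam : κ → ℕ) (hlam : ∀ i, 0 < lam i)
    (hz : ∀ i, z i ^ lam i = 1)
    (h : ∀ S : Subalgebra F D, (∀ i, (y i : D) ∈ S) → (∀ i, ((y i)⁻¹ : Dˣ).val ∈ S) →
      (∀ i, z i ∈ S) → S = ⊤) : r ≤ s := by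
  let A := Algebra.adjoin F (Set.range fun i => (y i : D))
  let S : Subalgebra F D := (Subalgebra.algebraicClosure A D).restrictScalars F
  have hy : ∀ i, (y i : D) ∈ A := fun i => Algebra.subset_adjoin ⟨i, rfl⟩
  have hS : S = ⊤ := by
    apply h
    · intro i
      exact isAlgebraic_algebraMap (⟨y i, hy i⟩ : A)
    · intro i
      -- the inverse of `y i` is a root of `y i * X - 1`
      refine ⟨Polynomial.C (⟨y i, hy i⟩ : A) * Polynomial.X - 1, fun h0 => ?_, ?_⟩
      · have := congrArg (Polynomial.eval 0) h0
        simp at this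
      · simp
    · intro i
      exact IsIntegral.isAlgebraic (IsIntegral.of_pow (hlam i) (by rw [hz i]; exact isIntegral_one))
  have halg : Algebra.IsAlgebraic A D := ⟨fun a => by
    have : a ∈ S := hS ▸ Algebra.mem_top
    exact this⟩
  have h1 := Algebra.IsAlgebraic.trdeg_le_cardinalMk F (Set.range fun i => (y i : D))
  have h2 := hx.lift_cardinalMk_le_trdeg
  have h3 : Cardinal.mk (Set.range fun i => (y i : D)) ≤ s := by
    simpa using Cardinal.mk_range_le_lift (f := fun i => (y i : D))
  have h4 := h1.trans h3
  have h5 := h2.trans (Cardinal.lift_le.2 h4)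
  simpa using h5


/-- If `E = F⟨x₁⟩...⟨x_r⟩` is a Π-extension of a difference field `F` and
`H = F⟨y₁⟩...⟨y_s⟩[z₁]...[z_l]` is an RΠ-extension of `F`, and there is a difference
ring embedding `λ : E → H` with `λ|_F = id`, then `r ≤ s`. -/
theorem stmt_18 (F E H : Type*) [Field F] [CharZero F] [CommRing E] [CommRing H]
    (σF : F ≃+* F) (σE : E ≃+* E) (σH : H ≃+* H)
    (ιE : F →+* E) (ιH : F →+* H)
    (hcommE : ∀ c : F, σE (ιE c) = ιE (σF c))
    (hcommH : ∀ c : F, σH (ιH c) = ιH (σF c))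
    -- E = F⟨x₁⟩...⟨x_r⟩, a Π-extension of F:
    (r : ℕ) (x : Fin r → Eˣ) (f : Fin r → F) (hf : ∀ i, f i ≠ 0)
    (hσx : ∀ i, σE ((x i : E)) = ιE (f i) * (x i : E))
    (hbasisE : ∀ w : E, ∃! c : (Fin r →₀ ℤ) →₀ F,
      w = c.sum (fun ν b => ιE b * ∏ i : Fin r, ((x i ^ (ν i) : Eˣ) : E)))
    (hconstE : ∀ w : E, σE w = w → ∃ c : F, σF c = c ∧ w = ιE c)
    -- H = F⟨y₁⟩...⟨y_s⟩[z₁]...[z_l], an RΠ-extension of F: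
    (s l : ℕ) (y : Fin s → Hˣ) (z : Fin l → H)
    (lam : Fin l → ℕ) (hlam : ∀ i, 0 < lam i)
    (ρ : Fin l → F) (hρ : ∀ i, σF (ρ i) = ρ i ∧ ρ i ≠ 0 ∧ (ρ i) ^ (lam i) = 1)
    (hz : ∀ i, (z i) ^ (lam i) = 1)
    (hσz : ∀ i, σH (z i) = ιH (ρ i) * z i)
    (hσy : ∀ i : Fin s, ∃ a : Hˣ,
      ((a : H) ∈ Subring.closure (Set.range (⇑ιH) ∪
        {h : H | ∃ j : Fin s, (j : ℕ) < (i : ℕ) ∧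
          (h = ((y j : Hˣ) : H) ∨ h = (((y j)⁻¹ : Hˣ) : H))})) ∧
      (((a⁻¹ : Hˣ) : H) ∈ Subring.closure (Set.range (⇑ιH) ∪
        {h : H | ∃ j : Fin s, (j : ℕ) < (i : ℕ) ∧
          (h = ((y j : Hˣ) : H) ∨ h = (((y j)⁻¹ : Hˣ) : H))})) ∧
      σH ((y i : H)) = (a : H) * (y i : H))
    (hbasisH : ∀ w : H, ∃! c : ((Fin s →₀ ℤ) × (∀ i : Fin l, Fin (lam i))) →₀ F,
      w = c.sum (fun p b => ιH b * (∏ i : Fin s, ((y i ^ (p.1 i) : Hˣ) : H)) *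
        ∏ i : Fin l, (z i) ^ ((p.2 i : ℕ))))
    (hconstH : ∀ w : H, σH w = w → ∃ c : F, σF c = c ∧ w = ιH c)
    -- the difference ring embedding λ : E → H with λ|_F = id:
    (lamE : E →+* H) (hinjlam : Function.Injective lamE)
    (hlamσ : ∀ w : E, lamE (σE w) = σH (lamE w))
    (hlamF : ∀ c : F, lamE (ιE c) = ιH c) :
    r ≤ s := by
  let _ : Algebra F E := ιE.toAlgebra
  let _ : Algebra F H := ιH.toAlgebra
  let Λ : E →ₐ[F] H := { lamE with commutes' := hlamF }
  have hxE : AlgebraicIndependent F (fun i => (x i : E)) :=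
    algebraicIndependent_of_laurent x hbasisE
  have hxH : AlgebraicIndependent F (Λ ∘ fun i => (x i : E)) := hxE.map' hinjlam
  obtain ⟨P, hP, hxD⟩ := exists_prime_algebraicIndependent hxH
  let π := Ideal.Quotient.mkₐ F P
  refine card_le_of_algebraicIndependent hxD (fun i => Units.map (π : H →* H ⧸ P) (y i))
    (fun i => π (z i)) lam hlam (fun i => by rw [← map_pow, hz, map_one]) ?_
  intro S hy hy' hzS
  rw [eq_top_iff]
  rintro w -
  obtain ⟨w, rfl⟩ := Ideal.Quotient.mk_surjective w
  obtain ⟨c, hc, -⟩ := hbasisH w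
  change w ∈ S.comap π
  rw [hc]
  have hzpow : ∀ (i : Fin s) (n : ℤ), ((y i ^ n : Hˣ) : H) ∈ S.comap π := by
    intro i n
    cases n with
    | ofNat n => simpa using pow_mem (S := S.comap π) (x := (y i : H)) (hy i) n
    | negSucc n =>
      rw [zpow_negSucc, ← inv_pow, Units.val_pow_eq_pow_val]
      exact pow_mem (S := S.comap π) (x := (((y i)⁻¹ : Hˣ) : H)) (hy' i) _
  refine sum_mem fun p _ => mul_mem (mul_mem ?_ ?_) ?_
  · exact (S.comap π).algebraMap_mem _
  · exact prod_mem fun i _ => hzpow i _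
  · exact prod_mem fun i _ => pow_mem (S := S.comap π) (x := z i) (hzS i) _
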